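/- arXiv:2110.01673 — 6 statements merged into one kernel-verified Lean document; each statement's English description precedes it below -/
import Mathlib

section
/- Let α be a real number transcendental over ℚ and f : ℤ → ℤ the map f(x) = ⌊αx⌋. For all integers a and b with a ≠ b: {αa} < {αb} if and only if for every integer z, if f(z + a) = f(z) + f(a) + 1 then f(z + b) = f(z) + f(b) + 1. Here {t} denotes the fractional part t − ⌊t⌋. -/
/-! Write `{t}` for the fractional part. Since `⌊s + t⌋ = ⌊s⌋ + ⌊t⌋ + 1` holds exactly when
`{s} + {t} ≥ 1` (`floor_add_eq_add_one_iff`), the right-hand side says that every orbit point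
`{αz}` in `[1 - {αa}, 1)` also lies in `[1 - {αb}, 1)`. This is clear if `{αa} < {αb}`.
Conversely, `{αa} ≠ {αb}` because `α` is irrational and `a ≠ b`; and if `{αb} < {αa}`, then
density of the points `{αz}` (`exists_fract_mem_Ioo`) gives one in
`(1 - {αa}, 1 - {αb})`, contradicting the implication. -/

theorem floor_add_eq_add_one_iff (s t : ℝ) :
    ⌊s + t⌋ = ⌊s⌋ + ⌊t⌋ + 1 ↔ 1 ≤ Int.fract s + Int.fract t := by
  rw [Int.floor_eq_iff]
  have hs := Int.floor_add_fract s
  have ht := Int.floor_add_fract t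
  have hs1 := Int.fract_lt_one s
  have ht1 := Int.fract_lt_one t
  push_cast
  constructor
  · rintro ⟨h, -⟩
    linarith
  · intro h
    constructor <;> linarith

theorem exists_fract_mem_Ioo {α : ℝ} (hα : Irrational α) {c d : ℝ} (hc : 0 ≤ c) (hd : d ≤ 1)
    (hcd : c < d) : ∃ z : ℤ, Int.fract (α * z) ∈ Set.Ioo c d := by
  have hdense : Dense (AddSubgroup.closure {α, 1} : Set ℝ) :=
    dense_addSubgroupClosure_pair_iff.2 (by simpa using hα)
  obtain ⟨x, hx, hxc, hxd⟩ := hdense.exists_between hcd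
  obtain ⟨z, n, rfl⟩ := AddSubgroup.mem_closure_pair.1 hx
  refine ⟨z, ?_⟩
  have key : Int.fract (α * z) = z • α + n • (1 : ℝ) := by
    rw [Int.fract_eq_iff]
    refine ⟨by linarith, by linarith, -n, ?_⟩
    simp only [zsmul_eq_mul]
    push_cast
    ring
  rw [key]
  exact ⟨hxc, hxd⟩

/-- For transcendental `α`, `f x = ⌊α x⌋`, and integers `a ≠ b`:
`{αa} < {αb}` iff for all `z`, `f (z+a) = f z + f a + 1 → f (z+b) = f z + f b + 1`. -/
theorem stmt2 (α : ℝ) (hα : Transcendental ℚ α)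
    (f : ℤ → ℤ) (hf : ∀ x : ℤ, f x = ⌊α * (x : ℝ)⌋) (a b : ℤ) (hab : a ≠ b) :
    Int.fract (α * (a : ℝ)) < Int.fract (α * (b : ℝ)) ↔
      ∀ z : ℤ, f (z + a) = f z + f a + 1 → f (z + b) = f z + f b + 1 := by
  have hirr : Irrational α := hα.irrational
  simp only [hf, Int.cast_add, mul_add, floor_add_eq_add_one_iff]
  constructor
  · intro h z hz
    linarith
  · intro h
    by_contra hlt
    have hne : Int.fract (α * (b : ℝ)) ≠ Int.fract (α * (a : ℝ)) := by
      intro he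
      obtain ⟨n, hn⟩ := Int.fract_eq_fract.1 he
      rw [← mul_sub, ← Int.cast_sub] at hn
      exact (hirr.mul_intCast (sub_ne_zero.2 hab.symm)).ne_int n hn
    have hlt' := lt_of_le_of_ne (not_lt.1 hlt) hne
    obtain ⟨z, hz1, hz2⟩ := exists_fract_mem_Ioo hirr
      (c := 1 - Int.fract (α * (a : ℝ))) (d := 1 - Int.fract (α * (b : ℝ)))
      (by linarith [Int.fract_lt_one (α * (a : ℝ))])
      (by linarith [Int.fract_nonneg (α * (b : ℝ))]) (by linarith)
    have := h z (by linarith)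
    linarith
end

section
/- Let α be a real number transcendental over ℚ. For all positive integers m and n and all integers i and j, the set of integers x satisfying both x ≡ i (mod m) and ⌊αx⌋ ≡ j (mod n) is infinite. -/
/-!
Since `α * m / n` is irrational, the subgroup `G` of `ℝ` generated by `α * m` and `n` is dense.
An element `g = α * m * k + n * l` of `G` with `j < g + α * i < j + 1` yields the solution
`x = i + m * k`, because `⌊α * x⌋ = j - n * l`. Moreover `g = α * x - α * i - ⌊α * x⌋ + j` is
recovered from `x`. Finitely many solutions would therefore come from finitely many `g`, whereas `G`
stays dense after a finite set is removed, so that it still meets the interval.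
-/

/-- For transcendental `α`, positive integers `m, n` and integers `i, j`,
the set of integers `x` with `x ≡ i [ZMOD m]` and `⌊αx⌋ ≡ j [ZMOD n]` is infinite. -/
theorem stmt3 (α : ℝ) (hα : Transcendental ℚ α)
    (m n : ℤ) (hm : 0 < m) (hn : 0 < n) (i j : ℤ) :
    Set.Infinite {x : ℤ | x ≡ i [ZMOD m] ∧ ⌊α * (x : ℝ)⌋ ≡ j [ZMOD n]} := by
  intro hfin
  have hirr : Irrational (α * m / n) :=
    (hα.irrational.mul_intCast hm.ne').div_intCast hn.ne'
  have hdense := dense_addSubgroupClosure_pair_iff.mpr hirr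
  set f : ℤ → ℝ := fun x => α * x - α * i - ⌊α * (x : ℝ)⌋ + j with hf
  obtain ⟨g, ⟨hgG, hgf⟩, hg1, hg2⟩ := (hdense.sdiff_finite (hfin.image f)).exists_between
    (show (j : ℝ) - α * i < j - α * i + 1 by linarith)
  obtain ⟨k, l, rfl⟩ := AddSubgroup.mem_closure_pair.mp hgG
  simp only [zsmul_eq_mul] at hg1 hg2 hgf
  have hfloor : ⌊α * ((i + m * k : ℤ) : ℝ)⌋ = j - n * l := by
    rw [Int.floor_eq_iff]
    push_cast
    constructor <;> linarith
  refine hgf ⟨i + m * k, ⟨?_, ?_⟩, ?_⟩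
  · simp [Int.ModEq]
  · rw [hfloor]
    simp [Int.ModEq]
  · simp only [hf, hfloor]
    push_cast
    ring
end

section
/- Let α be a real number transcendental over ℚ and let n be a positive integer. For all integers a and b with {αa} < {αb}, there exists an integer x such that {αa} < {α·(n·x)} < {αb}; in other words, the set nℤ is dense in ℤ with respect to the linear preorder given by comparing the fractional parts {αx}. -/
/-!
A transcendental `α` is irrational, hence so is `α * n`, and the subgroup `ℤ·(α * n) + ℤ·1` is
dense in `ℝ` (Kronecker). It therefore meets the open interval `({αa}, {αb}) ⊆ [0, 1)` in a point
`x * (α * n) + m`; a point of `[0, 1)` is its own fractional part, and discarding the integer `m`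
does not change the fractional part, so this point is `{α(nx)}`.
-/

/-- For transcendental `α` and a positive integer `n`, the set `nℤ` is dense
with respect to the ordering of fractional parts: whenever `{αa} < {αb}` there is an
integer `x` with `{αa} < {α(nx)} < {αb}`. -/
theorem stmt5 (α : ℝ) (hα : Transcendental ℚ α)
    (n : ℤ) (hn : 0 < n) (a b : ℤ)
    (hab : Int.fract (α * (a : ℝ)) < Int.fract (α * (b : ℝ))) :
    ∃ x : ℤ, Int.fract (α * (a : ℝ)) < Int.fract (α * ((n * x : ℤ) : ℝ)) ∧
      Int.fract (α * ((n * x : ℤ) : ℝ)) < Int.fract (α * (b : ℝ)) := by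
  have h_irr : Irrational (α * n / 1) := by
    rw [div_one]
    exact hα.irrational.mul_intCast hn.ne'
  obtain ⟨y, hy, hay, hyb⟩ :=
    (dense_addSubgroupClosure_pair_iff.2 h_irr).exists_between hab
  obtain ⟨x, m, rfl⟩ := AddSubgroup.mem_closure_pair.1 hy
  have h_fract : Int.fract (α * ((n * x : ℤ) : ℝ)) = x • (α * n) + m • (1 : ℝ) := by
    rw [Int.fract_eq_iff]
    refine ⟨(Int.fract_nonneg _).trans hay.le, hyb.trans (Int.fract_lt_one _), -m, ?_⟩
    simp only [zsmul_eq_mul]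
    push_cast
    ring
  exact ⟨x, h_fract ▸ hay, h_fract ▸ hyb⟩
end

section
/- Let α be a real number transcendental over ℚ and f : ℤ → ℤ the map f(x) = ⌊αx⌋, with f^i denoting the i-th iterate of f (f^0 = id). For every natural number n and all real numbers a_0 < b_0, a_1 < b_1, …, a_n < b_n with each (a_i, b_i) ⊆ (0,1), there exists a positive integer x such that {α · f^i(x)} ∈ (a_i, b_i) for every i with 0 ≤ i ≤ n. Equivalently, the set of tuples ({αx}, {α f(x)}, …, {α f^n(x)}) for x ranging over the positive integers is dense in (0,1)^{n+1}. -/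
/-!
Put `x_i = f^[i] x` and `r_i = {α x_i}`. Since `x_{i+1} = α x_i - r_i`, one has
`α x_i = α^(i+1) x - t_i` with `t_0 = 0` and `t_{i+1} = α (t_i + r_i)`. So if targets `y_i` are
fixed, and `T_0 = 0`, `T_{i+1} = α (T_i + y_i)`, it suffices that `α^(i+1) x` is close to
`y_i + T_i` modulo `1` for all `i ≤ n`: inductively `r_i` is then close to `y_i` and `t_{i+1}` to
`T_{i+1}` (`fract_iterate_near`). Such an `x` exists by Kronecker's theorem, because
`1, α, …, α^(n+1)` are linearly independent over `ℚ` (`prod_exp_injective`).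

Kronecker's theorem (`kronecker_circle`) is proved in the style of Bohr. If the `m` unit complex
numbers `u_j(x) = w_j^(x+1) v_j` are never simultaneously close to `1`, then
`|∏ (1 + u_j(x))| ≤ 2^m r` for all `x`, with a fixed `r < 1`. Expand the `N`-th power of this
product: its coefficients sum to `2^(mN)`, each of them is at most `(2^m r)^N`
(`norm_coeff_le_of_bounded`, by averaging over `x`), and there are `(N+1)^m` of them. Hence
`1 ≤ (N+1)^m r^N` for all `N`, which is absurd.
-/

open Filter Topology in
/-- The geometric sums of `w` are bounded, so their means tend to `0`. -/
lemma mean_pow_tendsto_zero (w : ℂ) (hw : ‖w‖ = 1) (h1 : w ≠ 1) :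
    Tendsto (fun M : ℕ => (M : ℂ)⁻¹ * ∑ x ∈ Finset.range M, w ^ (x + 1)) atTop (𝓝 0) := by
  have hpos : 0 < ‖w - 1‖ := norm_pos_iff.2 (sub_ne_zero.2 h1)
  have hlim : Tendsto (fun M : ℕ => (M : ℝ)⁻¹ * (2 / ‖w - 1‖)) atTop (𝓝 0) := by
    simpa using (tendsto_inv_atTop_nhds_zero_nat (𝕜 := ℝ)).mul_const (2 / ‖w - 1‖)
  refine squeeze_zero_norm (fun M => ?_) hlim
  have hs : ∑ x ∈ Finset.range M, w ^ (x + 1) = w * ((w ^ M - 1) / (w - 1)) := by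
    rw [← geom_sum_eq h1, Finset.mul_sum]
    exact Finset.sum_congr rfl fun x _ => by ring
  rw [hs, norm_mul, norm_inv, Complex.norm_natCast, norm_mul, hw, one_mul, norm_div]
  gcongr
  calc ‖w ^ M - 1‖ ≤ ‖w ^ M‖ + ‖(1 : ℂ)‖ := norm_sub_le _ _
    _ = 2 := by rw [norm_pow, hw]; norm_num

open Filter Topology in
/-- A trigonometric polynomial bounded by `B` at all positive integers has all its coefficients
bounded by `B`: the coefficient of `W l` is the mean of the polynomial times `(W l)⁻¹ ^ (x + 1)`. -/
lemma norm_coeff_le_of_bounded {ι : Type*} [DecidableEq ι] (s : Finset ι) (W c : ι → ℂ)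
    (hW : ∀ k ∈ s, ‖W k‖ = 1) (hinj : Set.InjOn W s) (B : ℝ)
    (hB : ∀ x : ℕ, ‖∑ k ∈ s, c k * W k ^ (x + 1)‖ ≤ B) (l : ι) (hl : l ∈ s) : ‖c l‖ ≤ B := by
  have hl0 : W l ≠ 0 := by
    intro h
    have := hW l hl
    simp [h] at this
  have key : Tendsto (fun M : ℕ => ∑ k ∈ s, c k *
      ((M : ℂ)⁻¹ * ∑ x ∈ Finset.range M, (W k / W l) ^ (x + 1))) atTop
      (𝓝 (∑ k ∈ s, c k * if k = l then 1 else 0)) := by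
    refine tendsto_finsetSum _ fun k hk => Tendsto.const_mul _ ?_
    split_ifs with h
    · subst h
      refine tendsto_const_nhds.congr' ?_
      filter_upwards [eventually_gt_atTop 0] with M hM
      have : (M : ℂ) ≠ 0 := by exact_mod_cast hM.ne'
      simp [div_self hl0, this]
    · refine mean_pow_tendsto_zero _ (by rw [norm_div, hW k hk, hW l hl, div_one]) fun h1 => h ?_
      exact hinj hk hl ((div_eq_one_iff_eq hl0).1 h1)
  have hsum : (∑ k ∈ s, c k * if k = l then 1 else 0) = c l := by simp [hl]
  rw [hsum] at key
  refine le_of_tendsto key.norm ?_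
  filter_upwards [eventually_gt_atTop 0] with M hM
  have hM' : (0 : ℝ) < M := by exact_mod_cast hM
  have e : ∑ k ∈ s, c k * ((M : ℂ)⁻¹ * ∑ x ∈ Finset.range M, (W k / W l) ^ (x + 1)) =
      (M : ℂ)⁻¹ * ∑ x ∈ Finset.range M,
        (W l)⁻¹ ^ (x + 1) * ∑ k ∈ s, c k * W k ^ (x + 1) := by
    simp only [Finset.mul_sum]
    rw [Finset.sum_comm]
    refine Finset.sum_congr rfl fun x _ => Finset.sum_congr rfl fun k _ => ?_
    rw [div_eq_mul_inv, mul_pow]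
    ring
  rw [e, norm_mul, norm_inv, Complex.norm_natCast]
  calc (M : ℝ)⁻¹ * ‖∑ x ∈ Finset.range M, (W l)⁻¹ ^ (x + 1) * ∑ k ∈ s, c k * W k ^ (x + 1)‖
      ≤ (M : ℝ)⁻¹ * ∑ x ∈ Finset.range M, B := by
        gcongr
        refine (norm_sum_le _ _).trans (Finset.sum_le_sum fun x _ => ?_)
        rw [norm_mul, norm_pow, norm_inv, hW l hl]
        simpa using hB x
    _ = B := by
        simp only [Finset.sum_const, Finset.card_range, nsmul_eq_mul]
        field_simp

/-- Kronecker's theorem on the torus, for a tuple `w` of unit complex numbers that is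
multiplicatively independent, with positive exponents `x + 1`. -/
lemma kronecker_circle {m : ℕ} (w v : Fin m → ℂ) (hw : ∀ j, ‖w j‖ = 1) (hv : ∀ j, ‖v j‖ = 1)
    (hinj : Function.Injective fun k : Fin m → ℕ => ∏ j, w j ^ k j) (ε : ℝ) (hε : 0 < ε) :
    ∃ x : ℕ, ∀ j, ‖w j ^ (x + 1) * v j - 1‖ < ε := by
  classical
  by_contra! hcon
  set ρ : ℝ := √(4 - ε ^ 2) with hρ
  have hρ2 : ρ < 2 := by
    rw [hρ, Real.sqrt_lt' (by norm_num)]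
    nlinarith [pow_pos hε 2]
  have hρ0 : 0 ≤ ρ := Real.sqrt_nonneg _
  have hu : ∀ j (x : ℕ), ‖w j ^ (x + 1) * v j‖ = 1 := fun j x => by
    rw [norm_mul, norm_pow, hw, hv]; simp
  have hle2 : ∀ j (x : ℕ), ‖1 + w j ^ (x + 1) * v j‖ ≤ 2 := fun j x =>
    (norm_add_le _ _).trans (by rw [hu]; norm_num)
  have hprod : ∀ x : ℕ, ‖∏ j, (1 + w j ^ (x + 1) * v j)‖ ≤ 2 ^ m * (ρ / 2) := by
    intro x
    obtain ⟨j, hj⟩ := hcon x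
    have hjρ : ‖1 + w j ^ (x + 1) * v j‖ ≤ ρ := by
      have hp := parallelogram_law_with_norm ℝ (1 : ℂ) (w j ^ (x + 1) * v j)
      rw [hu, norm_sub_rev, norm_one] at hp
      refine Real.le_sqrt_of_sq_le ?_
      nlinarith
    rw [norm_prod, ← Finset.mul_prod_erase _ _ (Finset.mem_univ j)]
    have h2 : ∏ i ∈ Finset.univ.erase j, ‖1 + w i ^ (x + 1) * v i‖ ≤ 2 ^ (m - 1) := by
      refine (Finset.prod_le_prod (fun i _ => norm_nonneg _) fun i _ => hle2 i x).trans ?_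
      simp
    have hm : m = (m - 1) + 1 := by have := j.pos; omega
    calc _ ≤ ρ * 2 ^ (m - 1) := by gcongr
      _ = 2 ^ m * (ρ / 2) := by
        conv_rhs => rw [hm]
        ring
  have hmain : ∀ N : ℕ, 1 ≤ ((N : ℝ) + 1) ^ m * (ρ / 2) ^ N := by
    intro N
    let s : Finset (Fin m → ℕ) := Fintype.piFinset fun _ => Finset.range (N + 1)
    let c : (Fin m → ℕ) → ℂ := fun k => ∏ j, (v j ^ k j * (N.choose (k j) : ℂ))
    have hc : ∀ k, ‖c k‖ = ∏ j, (N.choose (k j) : ℝ) := fun k => by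
      simp [c, norm_prod, hv]
    have hexp : ∀ x : ℕ, ∑ k ∈ s, c k * (∏ j, w j ^ k j) ^ (x + 1) =
        (∏ j, (1 + w j ^ (x + 1) * v j)) ^ N := by
      intro x
      rw [← Finset.prod_pow]
      have : ∀ j, (1 + w j ^ (x + 1) * v j) ^ N =
          ∑ k ∈ Finset.range (N + 1), (w j ^ (x + 1) * v j) ^ k * (N.choose k : ℂ) := fun j => by
        rw [add_comm, add_pow]; simp
      simp only [this]
      rw [Finset.prod_univ_sum]
      refine Finset.sum_congr rfl fun k _ => ?_
      rw [← Finset.prod_pow, ← Finset.prod_mul_distrib]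
      refine Finset.prod_congr rfl fun j _ => ?_
      rw [mul_pow, ← pow_mul, ← pow_mul, mul_comm (k j)]
      ring
    have hb : ∀ k ∈ s, ∏ j, (N.choose (k j) : ℝ) ≤ (2 ^ m * (ρ / 2)) ^ N := by
      intro k hk
      rw [← hc]
      refine norm_coeff_le_of_bounded s _ c (fun k _ => ?_) hinj.injOn _ (fun x => ?_) k hk
      · simp [norm_prod, hw]
      · rw [hexp, norm_pow]
        gcongr
        exact hprod x
    have hsum : ∑ k ∈ s, ∏ j, (N.choose (k j) : ℝ) = (2 ^ m) ^ N := by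
      have := Finset.prod_univ_sum (fun _ : Fin m => Finset.range (N + 1))
        (fun _ k => (N.choose k : ℝ))
      rw [← this]
      have h2 : ∑ k ∈ Finset.range (N + 1), (N.choose k : ℝ) = 2 ^ N := by
        exact_mod_cast Nat.sum_range_choose N
      simp [h2, ← pow_mul, mul_comm]
    have hcard : (s.card : ℝ) = ((N : ℝ) + 1) ^ m := by simp [s]
    have h := Finset.sum_le_card_nsmul s _ _ hb
    rw [hsum, nsmul_eq_mul, hcard, mul_pow (2 ^ m : ℝ)] at h
    have hpos : (0 : ℝ) < (2 ^ m) ^ N := by positivity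
    refine le_of_mul_le_mul_left ?_ hpos
    linarith
  have hlim := tendsto_pow_const_mul_const_pow_of_lt_one m (r := ρ / 2) (by positivity)
    (by linarith)
  -- shifting by one turns `N ^ m * r ^ N` into `r` times the quantity bounded below in `hmain`
  have hlim' := (Filter.tendsto_add_atTop_iff_nat 1).2 hlim
  have hge : ∀ N : ℕ, ρ / 2 ≤ ((N + 1 : ℕ) : ℝ) ^ m * (ρ / 2) ^ (N + 1) := fun N => by
    have := mul_le_mul_of_nonneg_right (hmain N) (by positivity : 0 ≤ ρ / 2)
    push_cast
    rw [pow_succ]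
    linarith
  have hle0 : ρ / 2 ≤ 0 := ge_of_tendsto' hlim' hge
  have hzero : ρ / 2 = 0 := le_antisymm hle0 (by positivity)
  have := hmain 1
  rw [hzero] at this
  norm_num at this

/-- A point `e(t)` of the unit circle close to `1` has `t` close to an integer. -/
lemma exists_int_near_of_norm_exp_sub_one_lt (t δ : ℝ)
    (h : ‖Complex.exp (2 * Real.pi * t * Complex.I) - 1‖ < 4 * δ) :
    ∃ p : ℤ, |t - p| < δ := by
  refine ⟨round t, ?_⟩
  set s : ℝ := t - round t with hs
  have hs2 : |s| ≤ 1 / 2 := abs_sub_round t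
  have he : Complex.exp (2 * Real.pi * t * Complex.I) =
      Complex.exp (Complex.I * ((2 * Real.pi * s : ℝ) : ℂ)) := by
    rw [Complex.exp_eq_exp_iff_exists_int]
    refine ⟨round t, ?_⟩
    rw [hs]
    push_cast
    ring
  rw [he, Complex.norm_exp_I_mul_ofReal_sub_one] at h
  have hpi := Real.pi_pos
  have harg : 2 * Real.pi * s / 2 = Real.pi * s := by ring
  have habs : |Real.sin (Real.pi * s)| = Real.sin (Real.pi * |s|) := by
    rcases abs_cases s with ⟨h1, h2⟩ | ⟨h1, h2⟩
    · rw [h1, abs_of_nonneg]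
      exact Real.sin_nonneg_of_nonneg_of_le_pi (by positivity) (by nlinarith)
    · rw [h1, mul_neg, Real.sin_neg, abs_of_nonpos]
      exact Real.sin_nonpos_of_nonpos_of_neg_pi_le (by nlinarith) (by nlinarith)
  have hsin := Real.mul_le_sin (x := Real.pi * |s|) (by positivity) (by nlinarith)
  have hsin' : 2 / Real.pi * (Real.pi * |s|) = 2 * |s| := by field_simp
  rw [harg, norm_mul, Real.norm_eq_abs, Real.norm_eq_abs, habs, abs_of_pos two_pos] at h
  linarith

/-- The linear independence of `1, α, …, α ^ m` over `ℚ`, in multiplicative form. -/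
lemma prod_exp_injective (α : ℝ) (hα : Transcendental ℚ α) (m : ℕ) :
    Function.Injective fun k : Fin m → ℕ =>
      ∏ j : Fin m, Complex.exp (2 * Real.pi * ((α ^ ((j : ℕ) + 1) : ℝ) : ℂ) * Complex.I) ^ k j := by
  intro k l hkl
  simp only [← Complex.exp_nat_mul, ← Complex.exp_sum] at hkl
  obtain ⟨p, hp⟩ := Complex.exp_eq_exp_iff_exists_int.1 hkl
  have hreal : ∑ j : Fin m, (k j : ℝ) * α ^ ((j : ℕ) + 1) =
      ∑ j : Fin m, (l j : ℝ) * α ^ ((j : ℕ) + 1) + p := by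
    have h2 : (2 * Real.pi * Complex.I : ℂ) ≠ 0 := Complex.two_pi_I_ne_zero
    have e : ∀ q : Fin m → ℕ,
        ∑ j, (q j : ℂ) * (2 * Real.pi * ((α ^ ((j : ℕ) + 1) : ℝ) : ℂ) * Complex.I) =
        (2 * Real.pi * Complex.I) * ((∑ j : Fin m, (q j : ℝ) * α ^ ((j : ℕ) + 1) : ℝ) : ℂ) := by
      intro q
      push_cast
      rw [Finset.mul_sum]
      exact Finset.sum_congr rfl fun j _ => by ring
    rw [e, e, mul_comm (p : ℂ), ← mul_add] at hp
    exact_mod_cast mul_left_cancel₀ h2 hp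
  let P : Polynomial ℚ := ∑ j : Fin m,
    Polynomial.C ((k j : ℚ) - l j) * Polynomial.X ^ ((j : ℕ) + 1) - Polynomial.C (p : ℚ)
  have hP : Polynomial.aeval α P = 0 := by
    simp only [P, map_sub, map_sum, map_mul, map_pow, Polynomial.aeval_X,
      map_natCast, map_intCast, sub_mul, Finset.sum_sub_distrib]
    linarith
  have hP0 : P = 0 := by
    by_contra h
    exact hα ⟨P, h, hP⟩
  funext j
  have hcoeff := congrArg (fun Q : Polynomial ℚ => Q.coeff ((j : ℕ) + 1)) hP0
  simp only [P, Polynomial.coeff_sub, Polynomial.finsetSum_coeff, Polynomial.coeff_C_mul,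
    Polynomial.coeff_X_pow, Polynomial.coeff_C_succ, Polynomial.coeff_zero] at hcoeff
  have : ∀ i : Fin m, ((j : ℕ) + 1 = (i : ℕ) + 1) ↔ j = i := fun i => by
    rw [Nat.add_right_cancel_iff, Fin.val_inj]
  simp only [this] at hcoeff
  simp at hcoeff
  have : (k j : ℚ) = l j := by linarith
  exact_mod_cast this

/-- The shifts `T 0 = 0`, `T (i + 1) = α (T i + y i)`: `α ^ (i + 1) x - T i` would be `α f^[i] x`
if the fractional parts of the previous `α f^[j] x` were exactly the `y j`. -/
noncomputable def kroneckerShift (α : ℝ) (y : ℕ → ℝ) : ℕ → ℝ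
  | 0 => 0
  | i + 1 => α * (kroneckerShift α y i + y i)

/-- If every `α ^ (i + 1) x` is close modulo `1` to `y i + kroneckerShift α y i`, then the
fractional part of `α f^[i] x` is close to `y i`, the error growing at most by a factor
`2 |α| + 1` at each step. -/
lemma fract_iterate_near (α : ℝ) (f : ℤ → ℤ) (hf : ∀ x : ℤ, f x = ⌊α * (x : ℝ)⌋)
    (n : ℕ) (y : ℕ → ℝ) (η δ : ℝ) (hδ : 0 < δ) (hδη : δ * (2 * |α| + 1) ^ n < η)
    (hy : ∀ i ≤ n, η ≤ y i ∧ η ≤ 1 - y i) (x : ℤ)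
    (hx : ∀ i ≤ n, ∃ p : ℤ, |α ^ (i + 1) * x - (y i + kroneckerShift α y i) - p| < δ) :
    ∀ i ≤ n, |Int.fract (α * ((f^[i] x : ℤ) : ℝ)) - y i| < η := by
  set D : ℝ := 2 * |α| + 1 with hD
  have hα0 : 0 ≤ |α| := abs_nonneg α
  have hD1 : 1 ≤ D := by linarith
  have hstep : ∀ i ≤ n,
      |α ^ (i + 1) * x - α * ((f^[i] x : ℤ) : ℝ) - kroneckerShift α y i| ≤ δ * (D ^ i - 1) →
      |Int.fract (α * ((f^[i] x : ℤ) : ℝ)) - y i| ≤ δ * D ^ i := by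
    intro i hi he
    obtain ⟨p, hp⟩ := hx i hi
    have hDi : δ * D ^ i ≤ δ * D ^ n := by gcongr
    have hclose : |α * ((f^[i] x : ℤ) : ℝ) - p - y i| ≤ δ * D ^ i := by
      rw [abs_lt] at hp
      rw [abs_le] at he ⊢
      constructor <;> linarith
    have hlt := lt_of_le_of_lt (hclose.trans hDi) hδη
    rw [abs_lt] at hlt
    have hfr : Int.fract (α * ((f^[i] x : ℤ) : ℝ)) = α * ((f^[i] x : ℤ) : ℝ) - p := by
      rw [Int.fract_eq_iff]
      refine ⟨?_, ?_, p, by ring⟩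
      · linarith [(hy i hi).1]
      · linarith [(hy i hi).2]
    rwa [hfr]
  have herr : ∀ i ≤ n,
      |α ^ (i + 1) * x - α * ((f^[i] x : ℤ) : ℝ) - kroneckerShift α y i| ≤ δ * (D ^ i - 1) := by
    intro i
    induction i with
    | zero => intro _; simp [kroneckerShift]
    | succ i ih =>
      intro hi
      have h1 := ih (by omega)
      have h2 := hstep i (by omega) h1
      set r := Int.fract (α * ((f^[i] x : ℤ) : ℝ)) with hr
      set X := ((f^[i] x : ℤ) : ℝ) with hX
      have hnext : ((f^[i + 1] x : ℤ) : ℝ) = α * X - r := by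
        rw [Function.iterate_succ_apply', hf, hr, Int.fract]
        ring
      have heq : α ^ (i + 1 + 1) * x - α * ((f^[i + 1] x : ℤ) : ℝ) - kroneckerShift α y (i + 1) =
          α * ((α ^ (i + 1) * x - α * X - kroneckerShift α y i) + (r - y i)) := by
        rw [hnext, kroneckerShift]
        ring
      rw [heq, abs_mul]
      have hDi : 1 ≤ D ^ i := one_le_pow₀ hD1
      calc _ ≤ |α| * (δ * (D ^ i - 1) + δ * D ^ i) := by
            gcongr
            exact (abs_add_le _ _).trans (add_le_add h1 h2)
        _ ≤ δ * (D ^ (i + 1) - 1) := by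
            have : δ * (D ^ (i + 1) - 1) - |α| * (δ * (D ^ i - 1) + δ * D ^ i) =
                δ * ((D ^ i - 1) + |α|) := by rw [pow_succ, hD]; ring
            have h3 : 0 ≤ δ * ((D ^ i - 1) + |α|) :=
              mul_nonneg hδ.le (add_nonneg (by linarith) hα0)
            linarith
  intro i hi
  refine lt_of_le_of_lt ((hstep i hi (herr i hi)).trans ?_) hδη
  gcongr

/-- extended Kronecker lemma: For transcendental `α`, `f x = ⌊α x⌋`, every
`n : ℕ` and intervals `(a i, b i) ⊆ (0,1)` for `i ≤ n`, there is a positive integer `x`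
with `{α · f^[i] x} ∈ (a i, b i)` for all `i ≤ n`. -/
theorem stmt6 (α : ℝ) (hα : Transcendental ℚ α)
    (f : ℤ → ℤ) (hf : ∀ x : ℤ, f x = ⌊α * (x : ℝ)⌋)
    (n : ℕ) (a b : ℕ → ℝ)
    (hab : ∀ i ≤ n, 0 ≤ a i ∧ a i < b i ∧ b i ≤ 1) :
    ∃ x : ℤ, 0 < x ∧ ∀ i ≤ n,
      Int.fract (α * ((f^[i] x : ℤ) : ℝ)) ∈ Set.Ioo (a i) (b i) := by
  obtain ⟨i₀, hi₀, hmin⟩ := Finset.exists_min_image (Finset.range (n + 1))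
    (fun i => (b i - a i) / 2) ⟨0, by simp⟩
  set η : ℝ := (b i₀ - a i₀) / 2 with hη
  have hη0 : 0 < η := by
    have := (hab i₀ (by simpa [Nat.lt_succ_iff] using hi₀)).2.1
    rw [hη]; linarith
  have hηi : ∀ i ≤ n, η ≤ (b i - a i) / 2 := fun i hi =>
    hmin i (Finset.mem_range.2 (by omega))
  let y : ℕ → ℝ := fun i => (a i + b i) / 2
  have hDpos : 0 < (2 * |α| + 1) ^ n := by positivity
  set δ : ℝ := η / (2 * (2 * |α| + 1) ^ n) with hδdef
  have hδ : 0 < δ := by positivity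
  have hδη : δ * (2 * |α| + 1) ^ n < η := by
    have : δ * (2 * |α| + 1) ^ n = η / 2 := by rw [hδdef]; field_simp
    linarith
  have hnorm : ∀ t : ℝ, ‖Complex.exp (2 * Real.pi * (t : ℂ) * Complex.I)‖ = 1 := fun t => by
    have := Complex.norm_exp_ofReal_mul_I (2 * Real.pi * t)
    push_cast at this
    exact this
  obtain ⟨x, hx⟩ := kronecker_circle (m := n + 1)
    (fun j => Complex.exp (2 * Real.pi * ((α ^ ((j : ℕ) + 1) : ℝ) : ℂ) * Complex.I))
    (fun j => Complex.exp (2 * Real.pi * ((-(y j + kroneckerShift α y j) : ℝ) : ℂ) * Complex.I))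
    (fun j => hnorm _) (fun j => hnorm _) (prod_exp_injective α hα (n + 1)) (4 * δ) (by positivity)
  refine ⟨(x : ℤ) + 1, by omega, fun i hi => ?_⟩
  have hfin := fract_iterate_near α f hf n y η δ hδ hδη (fun i hi => ?_) ((x : ℤ) + 1)
    (fun i hi => ?_) i hi
  · have := hηi i hi
    simp only [y] at hfin
    rw [abs_lt] at hfin
    constructor <;> linarith [hfin.1, hfin.2]
  · have := hηi i hi
    obtain ⟨h0, _, h1⟩ := hab i hi
    simp only [y]
    constructor <;> linarith
  · refine exists_int_near_of_norm_exp_sub_one_lt _ _ ?_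
    have h := hx ⟨i, by omega⟩
    rw [← Complex.exp_nat_mul, ← Complex.exp_add] at h
    convert h using 4
    push_cast
    ring
end

section
/- Let α be a real number transcendental over ℚ with α > 1, and f : ℤ → ℤ the map f(x) = ⌊αx⌋. For every nonzero integer A: A lies in the range of f if and only if {A/α} > 1 − 1/α; moreover, in that case the unique integer x with f(x) = A is x = ⌊A/α⌋ + 1. Here {t} denotes the fractional part t − ⌊t⌋. -/
/-!
Put `t = A / α`. Then `⌊α x⌋ = A` says `t ≤ x < t + 1 / α`. Since `A ≠ 0`, the equality `t = x`
would make `α = A / x` rational, so the left inequality is strict. As `1 / α < 1`, this gives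
`t < x < t + 1`, whose only integer solution is `x = ⌊t⌋ + 1`; for this `x` the remaining
condition `x < t + 1 / α` reads `1 - 1 / α < fract t`.
-/

/-- For transcendental `α > 1` and `f x = ⌊α x⌋`, a nonzero integer `A` is in
the range of `f` iff `{A/α} > 1 − 1/α`; moreover in that case the unique solution of
`f x = A` is `x = ⌊A/α⌋ + 1`. -/
theorem stmt8 (α : ℝ) (hα : Transcendental ℚ α) (hα1 : 1 < α)
    (f : ℤ → ℤ) (hf : ∀ x : ℤ, f x = ⌊α * (x : ℝ)⌋)
    (A : ℤ) (hA : A ≠ 0) :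
    ((∃ x : ℤ, f x = A) ↔ 1 - 1 / α < Int.fract ((A : ℝ) / α)) ∧
      (∀ x : ℤ, f x = A → x = ⌊(A : ℝ) / α⌋ + 1) := by
  have hpos : 0 < α := by linarith
  have hinv : 1 / α < 1 := (div_lt_one hpos).2 hα1
  have key : ∀ x : ℤ, f x = A ↔ (A : ℝ) / α ≤ x ∧ (x : ℝ) < A / α + 1 / α := by
    intro x
    rw [hf, Int.floor_eq_iff, ← add_div, div_le_iff₀ hpos, lt_div_iff₀ hpos, mul_comm α]
  have hne : ∀ x : ℤ, (A : ℝ) / α ≠ x := by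
    intro x hx
    have hAx : (A : ℝ) = x * α := (div_eq_iff hpos.ne').1 hx
    have hx0 : (x : ℝ) ≠ 0 := by
      intro h0
      rw [h0, zero_mul] at hAx
      exact hA (by exact_mod_cast hAx)
    have hrat : α = algebraMap ℚ ℝ ((A : ℚ) / x) := by
      rw [eq_ratCast]
      push_cast
      rw [eq_div_iff hx0, hAx, mul_comm]
    exact hα (hrat ▸ isAlgebraic_algebraMap _)
  have huniq : ∀ x : ℤ, f x = A → x = ⌊(A : ℝ) / α⌋ + 1 := by
    intro x hx
    obtain ⟨h1, h2⟩ := (key x).1 hx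
    have h3 := lt_of_le_of_ne h1 (hne x)
    have h4 : ⌊(A : ℝ) / α⌋ = x - 1 := by
      rw [Int.floor_eq_iff]
      push_cast
      constructor <;> linarith
    omega
  have hfr := Int.self_sub_floor ((A : ℝ) / α)
  refine ⟨⟨?_, ?_⟩, huniq⟩
  · rintro ⟨x, hx⟩
    have h2 := ((key x).1 hx).2
    rw [huniq x hx] at h2
    push_cast at h2
    linarith
  · intro h
    refine ⟨⌊(A : ℝ) / α⌋ + 1, (key _).2 ?_⟩
    push_cast
    exact ⟨(Int.lt_floor_add_one _).le, by linarith⟩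
end

section
/- Let α be a real number transcendental over ℚ with α > 2, and f : ℤ → ℤ the map f(x) = ⌊αx⌋. For every integer A: A lies in the range of f if and only if for every integer j with 0 < j < ⌊α⌋, neither A − j nor A + j lies in the range of f. -/
/-!
Put `m = ⌊α⌋ ≥ 2`. Consecutive values of `f` differ by `m` or `m + 1`. Hence two distinct values
are at distance at least `m`, which is the forward direction. Conversely, an integer outside the
range lies strictly between some `f x` and `f (x + 1)`; its distances to these two add up to at
most `m + 1 < 2 * m`, so one of them is less than `m`.
-/

theorem floor_mul_add_floor_le {α : ℝ} (h : 0 ≤ α) {x y : ℤ} (hxy : x < y) :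
    ⌊α * (x : ℝ)⌋ + ⌊α⌋ ≤ ⌊α * (y : ℝ)⌋ := by
  have h1 : ((x : ℝ) + 1) ≤ y := by exact_mod_cast hxy
  rw [Int.le_floor]
  push_cast
  nlinarith [Int.floor_le α, Int.floor_le (α * (x : ℝ)), mul_le_mul_of_nonneg_left h1 h]

theorem floor_mul_succ_le (α : ℝ) (x : ℤ) :
    ⌊α * ((x + 1 : ℤ) : ℝ)⌋ ≤ ⌊α * (x : ℝ)⌋ + ⌊α⌋ + 1 := by
  rw [← Int.lt_add_one_iff, Int.floor_lt]
  push_cast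
  nlinarith [Int.lt_floor_add_one α, Int.lt_floor_add_one (α * (x : ℝ))]

/-- Every integer lies in some half-open interval `[⌊α x⌋, ⌊α (x + 1)⌋)`. -/
theorem exists_floor_mul_le_lt {α : ℝ} (h : 0 < α) (A : ℤ) :
    ∃ x : ℤ, ⌊α * (x : ℝ)⌋ ≤ A ∧ A < ⌊α * ((x + 1 : ℤ) : ℝ)⌋ := by
  -- `x + 1` is the least integer `z` with `A + 1 ≤ α * z`.
  refine ⟨⌈((A : ℝ) + 1) / α⌉ - 1, ?_, ?_⟩
  · have h1 := Int.ceil_lt_add_one (((A : ℝ) + 1) / α)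
    rw [← Int.lt_add_one_iff, Int.floor_lt]
    push_cast
    rw [mul_comm, ← lt_div_iff₀ h]
    linarith
  · have h1 := Int.le_ceil (((A : ℝ) + 1) / α)
    rw [← Int.add_one_le_iff, Int.le_floor]
    push_cast
    rw [mul_comm, ← div_le_iff₀ h]
    linarith

/-- For transcendental `α > 2` and `f x = ⌊α x⌋`, an integer `A` is in the
range of `f` iff for every `j` with `0 < j < ⌊α⌋`, neither `A − j` nor `A + j` is in the
range of `f`. -/
theorem stmt9 (α : ℝ) (hα : Transcendental ℚ α) (hα2 : 2 < α)
    (f : ℤ → ℤ) (hf : ∀ x : ℤ, f x = ⌊α * (x : ℝ)⌋) (A : ℤ) :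
    A ∈ Set.range f ↔
      ∀ j : ℤ, 0 < j → j < ⌊α⌋ →
        (A - j) ∉ Set.range f ∧ (A + j) ∉ Set.range f := by
  have h0 : 0 < α := by linarith
  have hm : 2 ≤ ⌊α⌋ := Int.le_floor.2 (by exact_mod_cast hα2.le)
  have gap : ∀ x y : ℤ, x < y → f x + ⌊α⌋ ≤ f y := fun x y h => by
    rw [hf, hf]
    exact floor_mul_add_floor_le h0.le h
  constructor
  · rintro ⟨x, rfl⟩ j hj0 hj
    constructor <;>
    · rintro ⟨y, hy⟩
      rcases lt_trichotomy x y with h | h | h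
      · have := gap x y h
        omega
      · subst h
        omega
      · have := gap y x h
        omega
  · intro H
    obtain ⟨x, h1, h2⟩ := exists_floor_mul_le_lt h0 A
    have h3 := floor_mul_succ_le α x
    rw [← hf] at h1 h2 h3
    rw [← hf] at h3
    by_contra hA
    have hne : f x ≠ A := fun h => hA ⟨x, h⟩
    by_cases hc : A - f x < ⌊α⌋
    · exact (H (A - f x) (by omega) hc).1 ⟨x, by omega⟩
    · exact (H (f (x + 1) - A) (by omega) (by omega)).2 ⟨x + 1, by omega⟩
end
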